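/- Let d ≥ 1, let J_d(u) = ∫_{‖x‖≤1} e^{−i⟨u,x⟩} dx for u ∈ ℝ^d (the Fourier transform of the indicator of the closed unit ball, which is real-valued), and let S be the measure on ℝ^d with density u ↦ J_d(u)² with respect to Lebesgue measure. Then for every ρ with 0 < ρ < 2/π, S induces linear maximal rigidity on the closed ball B(0,ρ). -/

import Mathlib

open MeasureTheory Complex
open scoped RealInnerProductSpace

noncomputable section

abbrev Ed (d : ℕ) := EuclideanSpace ℝ (Fin d)

/-- Fourier transform `f̂(u) = ∫ e^{-i⟨u,x⟩} f(x) dx`. -/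
def FT {d : ℕ} (f : Ed d → ℂ) (u : Ed d) : ℂ :=
  ∫ x : Ed d, Complex.exp (-Complex.I * (⟪u, x⟫ : ℝ)) * f x

/-- `f` is bounded, measurable, with bounded support contained in `A`. -/
def IsCBS {d : ℕ} (A : Set (Ed d)) (f : Ed d → ℂ) : Prop :=
  Measurable f ∧ (∃ C : ℝ, ∀ x, ‖f x‖ ≤ C) ∧
    Bornology.IsBounded (Function.support f) ∧ Function.support f ⊆ A

/-- `S` induces linear maximal rigidity on `A`. -/
def LMR {d : ℕ} (S : Measure (Ed d)) (A : Set (Ed d)) : Prop :=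
  ∀ f : Ed d → ℂ, IsCBS A f → ∀ ε : ℝ, 0 < ε →
    ∃ h : Ed d → ℂ, IsCBS Aᶜ h ∧ (∫ u, ‖FT f u - FT h u‖ ^ 2 ∂S) < ε

/-- `J_d(u) = ∫_{‖x‖≤1} e^{-i⟨u,x⟩} dx`, the Fourier transform of the indicator of the
closed unit ball; the integral is real-valued, so we record its real part. -/
def Jd (d : ℕ) (u : Ed d) : ℝ :=
  (∫ x in Metric.closedBall (0 : Ed d) 1, Complex.exp (-Complex.I * (⟪u, x⟫ : ℝ))).re


/-!
By duality in `L²(J² dx)` it suffices to show: if `g ∈ L²(dx)` and the Fourier transform of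
`k = J g` vanishes outside the ball of radius `ρ < 1`, then `k = 0`. Such a `k` is band-limited,
so on every line through the origin it is the restriction of an entire function `F` with
`‖F z‖ ≤ C exp (ρ |Im z|)`. The function `J` is radial, Lipschitz in `‖u‖`, and vanishes on
spheres; since `1 / |‖u‖ - r|` is not locally integrable near a sphere of radius `r`, the
factorization `k = J g` with `g` locally integrable forces the continuous function `k` to vanish
on every zero sphere of `J`. Up to a positive constant, `J` is a Poisson integral, and Sturm
comparison with `sin` yields a zero of `J` in every far enough interval of length `L > π`.
Hence `F` has at least about `2 R / L` real zeros of modulus at most `R`, while Jensen's formula,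
with the circle mean `2 R / π` of `|Im z|`, allows only about `2 ρ R / π`. Taking `L > π` with
`ρ L < π` gives `F = 0`.
-/

section ZeroDensity

open Filter Set

lemma circleAverage_abs_im {R : ℝ} (hR : 0 ≤ R) :
    Real.circleAverage (fun z : ℂ ↦ |z.im|) 0 R = 2 * R / Real.pi := by
  have h_im : ∀ θ : ℝ, |(circleMap 0 R θ).im| = R * |Real.sin θ| := fun θ ↦ by
    simp [circleMap, Complex.exp_ofReal_mul_I_im, abs_mul, abs_of_nonneg hR]
  have h_half : ∫ θ in (0 : ℝ)..Real.pi, |Real.sin θ| = 2 := by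
    have h_abs : EqOn (fun θ ↦ |Real.sin θ|) Real.sin (uIcc 0 Real.pi) := fun θ hθ ↦ by
      rw [uIcc_of_le Real.pi_pos.le] at hθ
      exact abs_of_nonneg (Real.sin_nonneg_of_mem_Icc hθ)
    rw [intervalIntegral.integral_congr h_abs, integral_sin, Real.cos_zero, Real.cos_pi]
    norm_num
  have h_periodic : Function.Periodic (fun θ ↦ |Real.sin θ|) Real.pi := fun θ ↦ by
    simp [Real.sin_add_pi]
  have h_full : ∫ θ in (0 : ℝ)..2 * Real.pi, |Real.sin θ| = 4 := by
    have h := h_periodic.intervalIntegral_add_zsmul_eq 2 0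
      fun a b ↦ (by fun_prop : Continuous fun θ ↦ |Real.sin θ|).intervalIntegrable a b
    norm_num [h_half] at h
    exact h
  simp only [Real.circleAverage, h_im, intervalIntegral.integral_const_mul, h_full, smul_eq_mul]
  field_simp
  ring

lemma one_le_divisor_of_eq_zero {F : ℂ → ℂ} (hF : Differentiable ℂ F) (hne : F ≠ 0) {a : ℂ}
    (ha : F a = 0) : 1 ≤ MeromorphicOn.divisor F univ a := by
  have h_an : AnalyticOnNhd ℂ F univ := fun z _ ↦ hF.analyticAt z
  have h_top : analyticOrderAt F a ≠ ⊤ := fun h ↦ hne <| funext fun z ↦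
    h_an.eqOn_zero_of_preconnected_of_eventuallyEq_zero isPreconnected_univ (mem_univ a)
      (analyticOrderAt_eq_top.1 h) (mem_univ z)
  have h_ne : analyticOrderAt F a ≠ 0 := (hF.analyticAt a).analyticOrderAt_ne_zero.2 ha
  rw [MeromorphicOn.AnalyticOnNhd.divisor_apply h_an (mem_univ a)]
  lift analyticOrderAt F a to ℕ using h_top with n
  simpa [Nat.one_le_iff_ne_zero] using h_ne

lemma sum_log_sub_log_le_circleAverage {F : ℂ → ℂ} (hF : Differentiable ℂ F) (hne : F ≠ 0)
    {R : ℝ} (hR : 1 ≤ R) (s : Finset ℂ) (hs : ∀ a ∈ s, F a = 0 ∧ ‖a‖ ≤ R) :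
    ∑ a ∈ s, (Real.log R - Real.log ‖a‖) ≤
      Real.circleAverage (fun z ↦ Real.log ‖F z‖) 0 R -
        Real.log ‖meromorphicTrailingCoeffAt F 0‖ := by
  open Function.locallyFinsuppWithin in
  have h_an : AnalyticOnNhd ℂ F univ := fun z _ ↦ hF.analyticAt z
  have h_le : ∑ a ∈ s, single a (1 : ℤ) ≤ MeromorphicOn.divisor F univ := fun z ↦ by
    rw [coe_sum, Finset.sum_apply]
    simp only [single_apply, Finset.sum_ite_eq]
    split_ifs with hz
    · exact one_le_divisor_of_eq_zero hF hne (hs z hz).1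
    · exact MeromorphicOn.AnalyticOnNhd.divisor_nonneg h_an z
  have h_single : ∀ a ∈ s, logCounting (single a (1 : ℤ)) R = Real.log R - Real.log ‖a‖ :=
    fun a ha ↦ by simp [logCounting_single_eq_log_sub_const (hs a ha).2]
  calc ∑ a ∈ s, (Real.log R - Real.log ‖a‖)
      = logCounting (∑ a ∈ s, single a (1 : ℤ)) R := by
        rw [map_sum, Finset.sum_apply, Finset.sum_congr rfl h_single]
    _ ≤ logCounting (MeromorphicOn.divisor F univ) R := logCounting_le h_le hR
    _ = _ := logCounting_divisor_eq_circleAverage_sub_const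
        (fun z ↦ (hF.analyticAt z).meromorphicAt) (by positivity)

lemma exists_mul_sub_le_sum_log {θ : ℝ} (hθ₀ : 0 ≤ θ) (hθ₁ : θ < 1) (m : ℕ) :
    ∃ N₀ : ℕ, ∀ N : ℕ, θ * (N - N₀) ≤
      ∑ k ∈ Finset.range N, (Real.log (m + N) - Real.log (m + k + 1)) := by
  set S : ℕ → ℝ := fun N ↦ ∑ k ∈ Finset.range N, (Real.log (m + N) - Real.log (m + k + 1)) with hS
  have h_nonneg : ∀ N, 0 ≤ S N := fun N ↦ Finset.sum_nonneg fun k hk ↦ sub_nonneg.2 <|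
    Real.log_le_log (by positivity) (by
      have : (k : ℝ) + 1 ≤ N := mod_cast Finset.mem_range.1 hk
      linarith)
  have h_succ : ∀ N, S (N + 1) = S N + N * (Real.log (m + N + 1) - Real.log (m + N)) := fun N ↦ by
    simp only [hS, Finset.sum_sub_distrib, Finset.sum_range_succ, Finset.sum_const,
      Finset.card_range, nsmul_eq_mul, Nat.cast_add, Nat.cast_one, add_assoc]
    ring
  have h_log : ∀ N : ℕ, 1 ≤ N → N / (m + N + 1 : ℝ) ≤
      N * (Real.log (m + N + 1) - Real.log (m + N)) := fun N hN ↦ by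
    have : (1 : ℝ) ≤ N := mod_cast hN
    have h := Real.one_sub_inv_le_log_of_pos (x := (m + N + 1 : ℝ) / (m + N)) (by positivity)
    rw [Real.log_div (by positivity) (by positivity)] at h
    calc N / (m + N + 1 : ℝ) = N * (1 - ((m + N + 1 : ℝ) / (m + N))⁻¹) := by field_simp; ring
      _ ≤ _ := by gcongr
  obtain ⟨N₀, hN₀⟩ := exists_nat_ge (max 1 (θ * (m + 1) / (1 - θ)))
  rw [max_le_iff, div_le_iff₀ (by linarith)] at hN₀
  refine ⟨N₀, fun N ↦ ?_⟩
  change θ * (N - N₀) ≤ S N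
  rcases le_total N N₀ with h | h
  · have : (N : ℝ) ≤ N₀ := mod_cast h
    exact (mul_nonpos_of_nonneg_of_nonpos hθ₀ (by linarith)).trans (h_nonneg N)
  · induction N, h using Nat.le_induction with
    | base => simpa using h_nonneg N₀
    | succ N hN ih =>
      have hN' : (N₀ : ℝ) ≤ N := mod_cast hN
      have h_step : θ ≤ N / (m + N + 1 : ℝ) := by
        rw [le_div_iff₀ (by positivity)]
        nlinarith
      rw [h_succ]
      push_cast
      linarith [h_log N (by exact_mod_cast hN₀.1.trans hN')]

lemma circleAverage_log_norm_le {F : ℂ → ℂ} (hF : Differentiable ℂ F) {C ρ R : ℝ} (hρ : 0 ≤ ρ)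
    (hR : 0 ≤ R) (hb : ∀ z, ‖F z‖ ≤ C * Real.exp (ρ * |z.im|)) :
    Real.circleAverage (fun z ↦ Real.log ‖F z‖) 0 R ≤
      Real.log (max C 1) + ρ * (2 * R / Real.pi) := by
  have h_cont : Continuous fun z : ℂ ↦ |z.im| := by fun_prop
  have h_int : CircleIntegrable (fun z : ℂ ↦ ρ * |z.im|) 0 R :=
    (continuous_const.mul h_cont).continuousOn.circleIntegrable'
  have h_mean : Real.circleAverage (fun z : ℂ ↦ Real.log (max C 1) + ρ * |z.im|) 0 R =
      Real.log (max C 1) + ρ * (2 * R / Real.pi) := by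
    have h := Real.circleAverage_fun_add
      (circleIntegrable_const (Real.log (max C 1)) (0 : ℂ) R) h_int
    have h' := Real.circleAverage_fun_smul (a := ρ) (f := fun z : ℂ ↦ |z.im|) (c := 0) (R := R)
    simp only [smul_eq_mul] at h'
    rw [h, Real.circleAverage_const, h', circleAverage_abs_im hR]
  rw [← h_mean]
  refine Real.circleAverage_mono ?_
    ((circleIntegrable_const _ _ _).add h_int) fun z _ ↦ ?_
  · exact MeromorphicOn.circleIntegrable_log_norm fun z _ ↦ (hF.analyticAt z).meromorphicAt
  · have h_exp : ‖F z‖ ≤ max C 1 * Real.exp (ρ * |z.im|) :=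
      (hb z).trans (by gcongr; exact le_max_left _ _)
    have h_pos : 0 < max C 1 := lt_max_of_lt_right one_pos
    rcases eq_or_ne (F z) 0 with hz | hz
    · simp only [hz, norm_zero, Real.log_zero]
      exact add_nonneg (Real.log_nonneg (le_max_right _ _)) (by positivity)
    · refine (Real.log_le_log (norm_pos_iff.2 hz) h_exp).trans_eq ?_
      rw [Real.log_mul h_pos.ne' (Real.exp_ne_zero _), Real.log_exp]

lemma sum_log_le_of_zeros {F : ℂ → ℂ} (hF : Differentiable ℂ F) (hne : F ≠ 0)
    {R : ℝ} (hR : 1 ≤ R) {r : ℕ → ℝ} (hr_pos : ∀ k, 0 < r k) (hr_inj : Function.Injective r)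
    (hr_zero : ∀ k, F (r k) = 0 ∧ F (-r k) = 0) {N : ℕ} (hr_le : ∀ k < N, r k ≤ R) :
    2 * ∑ k ∈ Finset.range N, (Real.log R - Real.log (r k)) ≤
      Real.circleAverage (fun z ↦ Real.log ‖F z‖) 0 R -
        Real.log ‖meromorphicTrailingCoeffAt F 0‖ := by
  have h_norm : ∀ k, ‖(r k : ℂ)‖ = r k := fun k ↦ by
    rw [Complex.norm_real, Real.norm_of_nonneg (hr_pos k).le]
  have h_disj : Disjoint ((Finset.range N).image fun k ↦ (r k : ℂ))
      ((Finset.range N).image fun k ↦ -(r k : ℂ)) := by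
    simp only [Finset.disjoint_left, Finset.mem_image, not_exists, not_and]
    rintro _ ⟨k, -, rfl⟩ l - h
    have : -r l = r k := mod_cast h
    linarith [hr_pos k, hr_pos l]
  have h_sum := sum_log_sub_log_le_circleAverage hF hne hR
    ((Finset.range N).image (fun k ↦ (r k : ℂ)) ∪ (Finset.range N).image fun k ↦ -(r k : ℂ)) (by
      simp only [Finset.mem_union, Finset.mem_image, Finset.mem_range]
      rintro _ (⟨k, hk, rfl⟩ | ⟨k, hk, rfl⟩)
      · exact ⟨(hr_zero k).1, (h_norm k).trans_le (hr_le k hk)⟩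
      · exact ⟨(hr_zero k).2, (norm_neg _).trans_le <| (h_norm k).trans_le (hr_le k hk)⟩)
  rw [Finset.sum_union h_disj,
    Finset.sum_image fun k _ l _ h ↦ hr_inj (Complex.ofReal_injective h),
    Finset.sum_image fun k _ l _ h ↦ hr_inj (Complex.ofReal_injective (neg_injective h))] at h_sum
  simpa only [norm_neg, h_norm, two_mul] using h_sum

lemma exists_strictMono_mem_Ioo {p : ℝ → Prop} {L : ℝ} (hL : 0 < L)
    (h : ∀ᶠ a : ℝ in atTop, ∃ r ∈ Ioo a (a + L), p r) :
    ∃ (m : ℕ) (r : ℕ → ℝ), 1 ≤ m * L ∧ StrictMono r ∧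
      ∀ k : ℕ, r k ∈ Ioo ((m + k) * L) ((m + k + 1) * L) ∧ p (r k) := by
  have h_lim : Tendsto (fun n : ℕ ↦ (n : ℝ) * L) atTop atTop :=
    tendsto_natCast_atTop_atTop.atTop_mul_const hL
  obtain ⟨m, hm, hm_one⟩ := ((h_lim.eventually (eventually_forall_ge_atTop.2 h)).and
    (h_lim.eventually_ge_atTop 1)).exists
  have h_le (k : ℕ) : (m : ℝ) * L ≤ (m + k) * L := by gcongr; simp
  choose r hr_mem hr using fun k : ℕ ↦ hm ((m + k) * L) (h_le k)
  have hr_lt (k : ℕ) : r k < (m + k + 1) * L := (hr_mem k).2.trans_eq (by ring)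
  refine ⟨m, r, hm_one, strictMono_nat_of_lt_succ fun k ↦ ?_, fun k ↦
    ⟨⟨(hr_mem k).1, hr_lt k⟩, hr k⟩⟩
  have h_gt := (hr_mem (k + 1)).1
  push_cast at h_gt
  exact (hr_lt k).trans (by rwa [add_assoc])

theorem entire_eq_zero_of_frequent_zeros {F : ℂ → ℂ} (hF : Differentiable ℂ F) {C ρ L : ℝ}
    (hρ : 0 ≤ ρ) (hL : 0 < L) (hρL : ρ * L < Real.pi)
    (hb : ∀ z, ‖F z‖ ≤ C * Real.exp (ρ * |z.im|))
    (hz : ∀ᶠ a : ℝ in atTop, ∃ r ∈ Ioo a (a + L), F r = 0 ∧ F (-r) = 0) : F = 0 := by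
  by_contra hne
  obtain ⟨m, r, hm, hr_mono, hr⟩ := exists_strictMono_mem_Ioo hL hz
  have h_le (k : ℕ) : 1 ≤ (m + k) * L := hm.trans (by gcongr; simp)
  have hr_pos (k : ℕ) : 0 < r k := one_pos.trans_le (h_le k) |>.trans (hr k).1.1
  have hr_lt (k : ℕ) : r k < (m + k + 1) * L := (hr k).1.2
  obtain ⟨θ, hθ_gt, hθ_lt⟩ := exists_between ((div_lt_one Real.pi_pos).2 hρL)
  have hθ : 0 ≤ θ := le_trans (by positivity) hθ_gt.le
  obtain ⟨N₀, hN₀⟩ := exists_mul_sub_le_sum_log hθ hθ_lt m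
  set c := Real.log (max C 1) - Real.log ‖meromorphicTrailingCoeffAt F 0‖
  have h_upper (N : ℕ) : 2 * (θ * (N - N₀)) ≤ c + 2 * (ρ * L / Real.pi) * (m + N) := by
    have h_pos : (0 : ℝ) < m + N := (mul_pos_iff_of_pos_right hL).1 (one_pos.trans_le (h_le N))
    have h_term (k : ℕ) : Real.log (m + N) - Real.log (m + k + 1) ≤
        Real.log ((m + N) * L) - Real.log (r k) := by
      rw [← Real.log_div (by positivity) (by positivity),
        ← Real.log_div (by positivity) (hr_pos k).ne']
      refine Real.log_le_log (by positivity) ?_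
      rw [div_le_div_iff₀ (by positivity) (hr_pos k), mul_assoc]
      gcongr
      exact (hr_lt k).le.trans_eq (mul_comm _ _)
    have h_sum := Finset.sum_le_sum fun k (_ : k ∈ Finset.range N) ↦ h_term k
    have hr_le (k : ℕ) (hk : k < N) : r k ≤ (m + N) * L := (hr_lt k).le.trans <| by
      rw [add_assoc]
      gcongr
      exact_mod_cast hk
    have h_jensen := sum_log_le_of_zeros hF hne (h_le N) hr_pos hr_mono.injective
      (fun k ↦ (hr k).2) hr_le
    have h_avg := circleAverage_log_norm_le hF hρ (zero_le_one.trans (h_le N)) hb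
    have h_eq : ρ * (2 * ((m + N) * L) / Real.pi) = 2 * (ρ * L / Real.pi) * (m + N) := by ring
    linarith [hN₀ N]
  obtain ⟨N, hN⟩ := exists_nat_gt
    ((c + 2 * (ρ * L / Real.pi) * m + 2 * θ * N₀) / (2 * (θ - ρ * L / Real.pi)))
  rw [div_lt_iff₀ (by linarith)] at hN
  linarith [h_upper N]

end ZeroDensity

section Sturm

open Set

variable {w w' q : ℝ → ℝ} {a κ : ℝ}

lemma exists_nonpos_of_hasDerivAt_sturm (hκ : 0 < κ)
    (hw : ∀ r ∈ Icc a (a + Real.pi / κ), HasDerivAt w (w' r) r)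
    (hw' : ∀ r ∈ Icc a (a + Real.pi / κ), HasDerivAt w' (-(q r) * w r) r)
    (hq : ∀ r ∈ Icc a (a + Real.pi / κ), κ ^ 2 < q r) :
    ∃ r ∈ Ioo a (a + Real.pi / κ), w r ≤ 0 := by
  by_contra! hpos
  have hab : a < a + Real.pi / κ := lt_add_of_pos_right a (by positivity)
  have h_width : κ * (a + Real.pi / κ - a) = Real.pi := by field_simp; ring
  set b := a + Real.pi / κ
  -- the Wronskian of `w` and the comparison solution `sin (κ (r - a))`
  set W : ℝ → ℝ := fun r ↦ w' r * Real.sin (κ * (r - a)) - w r * (κ * Real.cos (κ * (r - a)))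
    with hW
  have hW_deriv : ∀ r ∈ Icc a b,
      HasDerivAt W (-((q r - κ ^ 2) * (w r * Real.sin (κ * (r - a))))) r := fun r hr ↦ by
    have h_lin : HasDerivAt (fun r ↦ κ * (r - a)) κ r := by
      simpa using ((hasDerivAt_id r).sub_const a).const_mul κ
    exact (((hw' r hr).mul h_lin.sin).sub ((hw r hr).mul (h_lin.cos.const_mul κ))).congr_deriv
      (by ring)
  have hW_anti : StrictAntiOn W (Icc a b) := by
    refine strictAntiOn_of_deriv_neg (convex_Icc a b)
      (fun r hr ↦ (hW_deriv r hr).continuousAt.continuousWithinAt) fun r hr ↦ ?_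
    rw [interior_Icc] at hr
    have hr' := Ioo_subset_Icc_self hr
    have h_sin : 0 < Real.sin (κ * (r - a)) := by
      refine Real.sin_pos_of_pos_of_lt_pi (mul_pos hκ (sub_pos.2 hr.1)) ?_
      rw [← h_width]
      gcongr
      exact hr.2
    rw [(hW_deriv r hr').deriv]
    exact neg_neg_of_pos (mul_pos (sub_pos.2 (hq r hr')) (mul_pos (hpos r hr) h_sin))
  have hw_nonneg : MapsTo w (Icc a b) (Ici 0) := by
    have h_maps : MapsTo w (Ioo a b) (Ioi 0) := hpos
    rw [← closure_Ioo hab.ne, ← closure_Ioi]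
    refine h_maps.closure_of_continuousOn fun r hr ↦ ?_
    rw [closure_Ioo hab.ne] at hr
    exact (hw r hr).continuousAt.continuousWithinAt
  have hW_lt := hW_anti (left_mem_Icc.2 hab.le) (right_mem_Icc.2 hab.le) hab
  simp only [hW, h_width, sub_self, mul_zero, Real.sin_zero, Real.cos_zero, Real.sin_pi,
    Real.cos_pi] at hW_lt
  have ha : 0 ≤ w a := hw_nonneg (left_mem_Icc.2 hab.le)
  have hb : 0 ≤ w b := hw_nonneg (right_mem_Icc.2 hab.le)
  nlinarith

theorem exists_zero_of_hasDerivAt_sturm (hκ : 0 < κ)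
    (hw : ∀ r ∈ Icc a (a + Real.pi / κ), HasDerivAt w (w' r) r)
    (hw' : ∀ r ∈ Icc a (a + Real.pi / κ), HasDerivAt w' (-(q r) * w r) r)
    (hq : ∀ r ∈ Icc a (a + Real.pi / κ), κ ^ 2 < q r) :
    ∃ r ∈ Ioo a (a + Real.pi / κ), w r = 0 := by
  obtain ⟨x, hx, hwx⟩ := exists_nonpos_of_hasDerivAt_sturm hκ hw hw' hq
  obtain ⟨y, hy, hwy⟩ := exists_nonpos_of_hasDerivAt_sturm (w := -w) (w' := -w') hκ
    (fun r hr ↦ (hw r hr).neg) (fun r hr ↦ (hw' r hr).neg.congr_deriv (by simp)) hq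
  have h_cont : ContinuousOn w (Ioo a (a + Real.pi / κ)) := fun r hr ↦
    (hw r (Ioo_subset_Icc_self hr)).continuousAt.continuousWithinAt
  exact isPreconnected_Ioo.intermediate_value hx hy h_cont ⟨hwx, neg_nonpos.1 hwy⟩

end Sturm

section PoissonIntegral

open Filter Set

lemma hasDerivAt_intervalIntegral_comp_mul_mul {φ φ' g : ℝ → ℝ} {C : ℝ}
    (hφ : ∀ x, HasDerivAt φ (φ' x) x) (hφ'_cont : Continuous φ') (hφ'_le : ∀ x, |φ' x| ≤ C)
    (hg : Continuous g) (a b r : ℝ) :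
    HasDerivAt (fun r ↦ ∫ t in a..b, φ (r * t) * g t)
      (∫ t in a..b, φ' (r * t) * (t * g t)) r := by
  have hφ_cont : Continuous φ := continuous_iff_continuousAt.2 fun x ↦ (hφ x).continuousAt
  refine (intervalIntegral.hasDerivAt_integral_of_dominated_loc_of_deriv_le
    (F := fun r t ↦ φ (r * t) * g t) (F' := fun r t ↦ φ' (r * t) * (t * g t))
    (bound := fun t ↦ C * |t * g t|) univ_mem
    (.of_forall fun x ↦ (by fun_prop : Continuous _).aestronglyMeasurable)
    ((by fun_prop : Continuous _).intervalIntegrable _ _)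
    (by fun_prop : Continuous _).aestronglyMeasurable ?_
    ((by fun_prop : Continuous _).intervalIntegrable _ _) ?_).2
  · refine .of_forall fun t _ x _ ↦ ?_
    rw [Real.norm_eq_abs, abs_mul]
    gcongr
    exact hφ'_le _
  · refine .of_forall fun t _ x _ ↦ ?_
    refine (((hφ (x * t)).comp x ((hasDerivAt_id x).mul_const t)).mul_const (g t)).congr_deriv ?_
    ring

/-- Poisson's integral `∫_{-1}^1 cos(rt) (1 - t²)^α dt`, a constant multiple of
`r^{-(α+1/2)} J_{α+1/2}(r)` with `J` the Bessel function. -/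
def poissonIntegral (α r : ℝ) : ℝ :=
  ∫ t in (-1 : ℝ)..1, Real.cos (r * t) * (1 - t ^ 2) ^ α

variable {α : ℝ}

lemma continuous_one_sub_sq_rpow (hα : 0 ≤ α) : Continuous fun t : ℝ ↦ (1 - t ^ 2) ^ α :=
  Continuous.rpow_const (by fun_prop) fun _ ↦ Or.inr hα

lemma hasDerivAt_poissonIntegral (hα : 0 ≤ α) (r : ℝ) :
    HasDerivAt (poissonIntegral α)
      (∫ t in (-1 : ℝ)..1, -Real.sin (r * t) * (t * (1 - t ^ 2) ^ α)) r :=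
  hasDerivAt_intervalIntegral_comp_mul_mul Real.hasDerivAt_cos (by fun_prop)
    (fun x ↦ by simpa using Real.abs_sin_le_one x) (continuous_one_sub_sq_rpow hα) _ _ _

lemma hasDerivAt_deriv_poissonIntegral (hα : 0 ≤ α) (r : ℝ) :
    HasDerivAt (deriv (poissonIntegral α))
      (∫ t in (-1 : ℝ)..1, -Real.cos (r * t) * (t * (t * (1 - t ^ 2) ^ α))) r := by
  have := continuous_one_sub_sq_rpow hα
  rw [funext fun r ↦ (hasDerivAt_poissonIntegral hα r).deriv]
  exact hasDerivAt_intervalIntegral_comp_mul_mul (fun x ↦ (Real.hasDerivAt_sin x).neg)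
    (by fun_prop) (fun x ↦ by simpa using Real.abs_cos_le_one x) (by fun_prop) _ _ _

lemma poissonIntegral_add_deriv_deriv (hα : 0 ≤ α) (r : ℝ) :
    poissonIntegral α r + deriv (deriv (poissonIntegral α)) r = poissonIntegral (α + 1) r := by
  have := continuous_one_sub_sq_rpow hα
  rw [(hasDerivAt_deriv_poissonIntegral hα r).deriv, poissonIntegral, poissonIntegral,
    ← intervalIntegral.integral_add ((by fun_prop : Continuous _).intervalIntegrable _ _)
      ((by fun_prop : Continuous _).intervalIntegrable _ _)]
  refine intervalIntegral.integral_congr fun t ht ↦ ?_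
  rw [uIcc_of_le (by norm_num)] at ht
  have h_base : 0 ≤ 1 - t ^ 2 := by nlinarith [ht.1, ht.2]
  simp only [Real.rpow_add_one' h_base (by linarith : α + 1 ≠ 0)]
  ring

lemma mul_poissonIntegral_add_one (hα : 0 ≤ α) (r : ℝ) :
    r * poissonIntegral (α + 1) r = -(2 * (α + 1) * deriv (poissonIntegral α) r) := by
  have := continuous_one_sub_sq_rpow hα
  have := continuous_one_sub_sq_rpow (α := α + 1) (by linarith)
  have h_deriv : ∀ t ∈ uIcc (-1 : ℝ) 1,
      HasDerivAt (fun t ↦ Real.sin (r * t) * (1 - t ^ 2) ^ (α + 1))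
        (r * (Real.cos (r * t) * (1 - t ^ 2) ^ (α + 1)) +
          2 * (α + 1) * (-Real.sin (r * t) * (t * (1 - t ^ 2) ^ α))) t := fun t _ ↦ by
    have h_sin : HasDerivAt (fun t ↦ Real.sin (r * t)) (Real.cos (r * t) * r) t := by
      simpa using ((hasDerivAt_id t).const_mul r).sin
    have h_base : HasDerivAt (fun t : ℝ ↦ 1 - t ^ 2) (-(2 * t)) t := by
      simpa using (hasDerivAt_pow 2 t).const_sub 1
    refine (h_sin.mul (h_base.rpow_const (p := α + 1) (Or.inr (by linarith)))).congr_deriv ?_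
    rw [add_sub_cancel_right]
    ring
  have h_ftc := intervalIntegral.integral_eq_sub_of_hasDerivAt h_deriv
    ((by fun_prop : Continuous _).intervalIntegrable _ _)
  rw [intervalIntegral.integral_add ((by fun_prop : Continuous _).intervalIntegrable _ _)
      ((by fun_prop : Continuous _).intervalIntegrable _ _), intervalIntegral.integral_const_mul,
    intervalIntegral.integral_const_mul, ← (hasDerivAt_poissonIntegral hα r).deriv] at h_ftc
  have h_zero : (0 : ℝ) ^ (α + 1) = 0 := Real.zero_rpow (by linarith)
  rw [poissonIntegral, eq_neg_iff_add_eq_zero, h_ftc]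
  norm_num [h_zero]

lemma hasDerivAt_sturm_poissonIntegral (hα : 0 ≤ α) {r : ℝ} (hr : 0 < r) :
    HasDerivAt
      (fun r ↦ (α + 1) * r ^ α * poissonIntegral α r + r ^ (α + 1) * deriv (poissonIntegral α) r)
      (-(1 - α * (α + 1) / r ^ 2) * (r ^ (α + 1) * poissonIntegral α r)) r := by
  set K := poissonIntegral α
  have h_K : HasDerivAt K (deriv K r) r :=
    (hasDerivAt_poissonIntegral hα r).differentiableAt.hasDerivAt
  have h_K' : HasDerivAt (deriv K) (deriv (deriv K) r) r :=
    (hasDerivAt_deriv_poissonIntegral hα r).differentiableAt.hasDerivAt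
  have h_ode : r * (K r + deriv (deriv K) r) + 2 * (α + 1) * deriv K r = 0 := by
    rw [poissonIntegral_add_deriv_deriv hα, mul_poissonIntegral_add_one hα, neg_add_cancel]
  have h_pow : HasDerivAt (fun r : ℝ ↦ r ^ α) (α * r ^ (α - 1)) r :=
    Real.hasDerivAt_rpow_const (Or.inl hr.ne')
  have h_pow' : HasDerivAt (fun r : ℝ ↦ r ^ (α + 1)) ((α + 1) * r ^ α) r := by
    simpa using Real.hasDerivAt_rpow_const (x := r) (p := α + 1) (Or.inl hr.ne')
  refine (((h_pow.const_mul (α + 1)).mul h_K).add (h_pow'.mul h_K')).congr_deriv ?_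
  rw [Real.rpow_sub_one hr.ne', Real.rpow_add_one hr.ne']
  field_simp
  linear_combination r * h_ode

theorem eventually_exists_poissonIntegral_eq_zero (hα : 0 ≤ α) {L : ℝ} (hL : Real.pi < L) :
    ∀ᶠ a in atTop, ∃ r ∈ Ioo a (a + L), poissonIntegral α r = 0 := by
  have hL₀ : 0 < L := Real.pi_pos.trans hL
  set κ := Real.pi / L
  have hκ : 0 < κ := by positivity
  have hκ_sq : κ ^ 2 < 1 := by
    rw [sq_lt_one_iff₀ hκ.le]
    exact (div_lt_one hL₀).2 hL
  have h_width : Real.pi / κ = L := div_div_cancel₀ Real.pi_pos.ne'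
  have h_lim : Tendsto (fun r : ℝ ↦ 1 - α * (α + 1) / r ^ 2) atTop (nhds (1 - 0)) :=
    ((tendsto_pow_atTop two_ne_zero).const_div_atTop _).const_sub 1
  rw [sub_zero] at h_lim
  have h_large := (h_lim.eventually (lt_mem_nhds hκ_sq)).and (eventually_gt_atTop 0)
  filter_upwards [eventually_forall_ge_atTop.2 h_large] with a ha
  have h_deriv : ∀ r, HasDerivAt (fun r ↦ r ^ (α + 1) * poissonIntegral α r)
      ((α + 1) * r ^ α * poissonIntegral α r + r ^ (α + 1) * deriv (poissonIntegral α) r) r :=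
    fun r ↦ by
      have h_pow := Real.hasDerivAt_rpow_const (x := r) (p := α + 1) (Or.inr (by linarith))
      rw [add_sub_cancel_right] at h_pow
      exact h_pow.mul (hasDerivAt_poissonIntegral hα r).differentiableAt.hasDerivAt
  obtain ⟨r, hr, hr_zero⟩ := exists_zero_of_hasDerivAt_sturm (a := a) hκ (fun r _ ↦ h_deriv r)
    (fun r hr ↦ hasDerivAt_sturm_poissonIntegral hα (ha r hr.1).2) (fun r hr ↦ (ha r hr.1).1)
  rw [h_width] at hr
  exact ⟨r, hr, (mul_eq_zero.1 hr_zero).resolve_left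
    (Real.rpow_pos_of_pos (ha r hr.1.le).2 _).ne'⟩

lemma abs_poissonIntegral_sub_le (hα : 0 ≤ α) (r s : ℝ) :
    |poissonIntegral α r - poissonIntegral α s| ≤ 2 * |r - s| := by
  refine Convex.norm_image_sub_le_of_norm_hasDerivWithin_le
    (fun x _ ↦ (hasDerivAt_poissonIntegral hα x).hasDerivWithinAt) (fun x _ ↦ ?_)
    convex_univ (mem_univ s) (mem_univ r)
  refine (intervalIntegral.norm_integral_le_of_norm_le_const (C := 1) fun t ht ↦ ?_).trans_eq
    (by norm_num)
  rw [uIoc_of_le (by norm_num)] at ht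
  have h_base : 0 ≤ 1 - t ^ 2 ∧ 1 - t ^ 2 ≤ 1 := ⟨by nlinarith [ht.1, ht.2], by nlinarith⟩
  have h_rpow : |(1 - t ^ 2) ^ α| ≤ 1 := by
    rw [abs_of_nonneg (Real.rpow_nonneg h_base.1 α)]
    exact Real.rpow_le_one h_base.1 h_base.2 hα
  rw [norm_mul, norm_mul, norm_neg]
  exact mul_le_one₀ (Real.abs_sin_le_one _) (by positivity)
    (mul_le_one₀ (abs_le.2 ⟨ht.1.le, ht.2⟩) (by positivity) h_rpow)

end PoissonIntegral

section BallTransform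

open Set Metric

variable {d : ℕ}

lemma Jd_eq_integral_cos (u : Ed d) :
    Jd d u = ∫ x in closedBall (0 : Ed d) 1, Real.cos ⟪u, x⟫ := by
  have h_int : IntegrableOn (fun x : Ed d ↦ Complex.exp (-Complex.I * (⟪u, x⟫ : ℝ)))
      (closedBall 0 1) :=
    ContinuousOn.integrableOn_compact (isCompact_closedBall _ _) (by fun_prop)
  refine (Complex.reCLM.integral_comp_comm h_int).symm.trans ?_
  congr 1 with x
  rw [Complex.reCLM_apply, neg_mul, mul_comm, ← neg_mul, ← Complex.ofReal_neg,
    Complex.exp_ofReal_mul_I_re, Real.cos_neg]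

lemma Jd_eq_of_norm_eq {u v : Ed d} (h : ‖u‖ = ‖v‖) : Jd d u = Jd d v := by
  set T := (ℝ ∙ (u - v))ᗮ.reflection
  have hT : T u = v := Submodule.reflection_sub h
  have h_ball : T ⁻¹' closedBall 0 1 = closedBall 0 1 := by
    ext x
    simp
  rw [Jd_eq_integral_cos, Jd_eq_integral_cos,
    ← T.measurePreserving.setIntegral_preimage_emb T.toHomeomorph.measurableEmbedding
      (fun x ↦ Real.cos ⟪v, x⟫), h_ball]
  simp_rw [← hT, T.inner_map_map]

lemma continuous_Jd : Continuous (Jd d) := by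
  rw [funext (Jd_eq_integral_cos (d := d))]
  refine continuous_of_dominated (bound := fun _ ↦ 1)
    (fun u ↦ (by fun_prop : Continuous _).aestronglyMeasurable)
    (fun u ↦ .of_forall fun x ↦ Real.abs_cos_le_one _)
    (integrableOn_const measure_closedBall_lt_top.ne) (.of_forall fun x ↦ by fun_prop)

/-- The isometry `(t, y) ↦ (t, y₁, …, yₙ)`, as a measurable equivalence. -/
def consEquiv (n : ℕ) : ℝ × Ed n ≃ᵐ Ed (n + 1) :=
  ((MeasurableEquiv.prodCongr (.refl ℝ) (MeasurableEquiv.toLp 2 (Fin n → ℝ)).symm).trans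
    (MeasurableEquiv.piFinSuccAbove (fun _ ↦ ℝ) 0).symm).trans
      (MeasurableEquiv.toLp 2 (Fin (n + 1) → ℝ))

lemma measurePreserving_consEquiv (n : ℕ) :
    MeasurePreserving (consEquiv n) (volume.prod volume) volume :=
  (PiLp.volume_preserving_toLp _).comp <|
    (volume_preserving_piFinSuccAbove (fun _ : Fin (n + 1) ↦ ℝ) 0).symm.comp <|
      (MeasurePreserving.id volume).prod
        (EuclideanSpace.volume_preserving_symm_measurableEquiv_toLp _)

lemma consEquiv_apply_zero (n : ℕ) (p : ℝ × Ed n) : consEquiv n p 0 = p.1 := rfl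

lemma consEquiv_apply_succ (n : ℕ) (p : ℝ × Ed n) (i : Fin n) :
    consEquiv n p i.succ = p.2 i := rfl

lemma norm_consEquiv_sq (n : ℕ) (p : ℝ × Ed n) :
    ‖consEquiv n p‖ ^ 2 = p.1 ^ 2 + ‖p.2‖ ^ 2 := by
  simp only [EuclideanSpace.real_norm_sq_eq, Fin.sum_univ_succ, consEquiv_apply_zero,
    consEquiv_apply_succ]

lemma slice_preimage_consEquiv_closedBall {n : ℕ} {t : ℝ} (ht : t ∈ Icc (-1 : ℝ) 1) :
    Prod.mk t ⁻¹' (consEquiv n ⁻¹' closedBall 0 1) = closedBall (0 : Ed n) √(1 - t ^ 2) := by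
  ext y
  have h_nonneg : 0 ≤ 1 - t ^ 2 := by nlinarith [ht.1, ht.2]
  rw [mem_preimage, mem_preimage, mem_closedBall_zero_iff, mem_closedBall_zero_iff,
    Real.le_sqrt (norm_nonneg _) h_nonneg, ← sq_le_one_iff₀ (norm_nonneg _), norm_consEquiv_sq,
    le_sub_iff_add_le']

lemma slice_preimage_consEquiv_closedBall_eq_empty {n : ℕ} {t : ℝ} (ht : t ∉ Icc (-1 : ℝ) 1) :
    Prod.mk t ⁻¹' (consEquiv n ⁻¹' closedBall (0 : Ed (n + 1)) 1) = ∅ := by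
  refine eq_empty_of_forall_notMem fun y hy ↦ ht ?_
  rw [mem_preimage, mem_preimage, mem_closedBall_zero_iff, ← sq_le_one_iff₀ (norm_nonneg _),
    norm_consEquiv_sq] at hy
  exact abs_le.1 ((sq_le_one_iff_abs_le_one t).1 (by nlinarith [sq_nonneg ‖y‖]))

lemma measureReal_slice_preimage_consEquiv_closedBall {n : ℕ} {t : ℝ}
    (ht : t ∈ Icc (-1 : ℝ) 1) :
    volume.real (Prod.mk t ⁻¹' (consEquiv n ⁻¹' closedBall 0 1)) =
      (1 - t ^ 2) ^ (n / 2 : ℝ) * volume.real (ball (0 : Ed n) 1) := by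
  have h_nonneg : 0 ≤ 1 - t ^ 2 := by nlinarith [ht.1, ht.2]
  rw [slice_preimage_consEquiv_closedBall ht, Measure.addHaar_real_closedBall _ _
    (Real.sqrt_nonneg _), finrank_euclideanSpace_fin, Real.sqrt_eq_rpow, ← Real.rpow_natCast,
    ← Real.rpow_mul h_nonneg]
  ring_nf

lemma setIntegral_prod_comp_fst {X Y E : Type*} [MeasurableSpace X] [MeasurableSpace Y]
    [NormedAddCommGroup E] [NormedSpace ℝ E] [CompleteSpace E] {μ : Measure X} {ν : Measure Y}
    [SFinite μ] [SFinite ν] {s : Set (X × Y)} (hs : MeasurableSet s) {f : X → E}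
    (hf : IntegrableOn (fun p ↦ f p.1) s (μ.prod ν)) :
    ∫ p in s, f p.1 ∂μ.prod ν = ∫ x, ν.real (Prod.mk x ⁻¹' s) • f x ∂μ := by
  rw [← integral_indicator hs, integral_prod _ ((integrable_indicator_iff hs).2 hf)]
  congr 1 with x
  rw [← integral_indicator_const (f x) (measurable_prodMk_left hs)]
  rfl

lemma Jd_single (n : ℕ) (r : ℝ) :
    Jd (n + 1) (EuclideanSpace.single 0 r) =
      volume.real (ball (0 : Ed n) 1) * poissonIntegral (n / 2) r := by
  have h_meas : MeasurableSet (consEquiv n ⁻¹' closedBall 0 1) :=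
    (consEquiv n).measurable measurableSet_closedBall
  have h_int : IntegrableOn (fun p : ℝ × Ed n ↦ Real.cos (r * p.1))
      (consEquiv n ⁻¹' closedBall 0 1) (volume.prod volume) := by
    refine Measure.integrableOn_of_bounded (M := 1) ?_
      (by fun_prop : Continuous _).aestronglyMeasurable (.of_forall fun p ↦ Real.abs_cos_le_one _)
    rw [(measurePreserving_consEquiv n).measure_preimage_equiv]
    exact measure_closedBall_lt_top.ne
  have h_inner (p : ℝ × Ed n) :
      ⟪(EuclideanSpace.single 0 r : Ed (n + 1)), consEquiv n p⟫ = r * p.1 := by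
    simp [EuclideanSpace.inner_single_left, consEquiv_apply_zero]
  rw [Jd_eq_integral_cos, ← (measurePreserving_consEquiv n).setIntegral_preimage_emb
    (consEquiv n).measurableEmbedding]
  simp only [h_inner]
  rw [setIntegral_prod_comp_fst (f := fun t ↦ Real.cos (r * t)) h_meas h_int,
    ← setIntegral_eq_integral_of_forall_compl_eq_zero (s := Icc (-1 : ℝ) 1) fun t ht ↦ by
      rw [slice_preimage_consEquiv_closedBall_eq_empty ht, measureReal_empty, zero_smul],
    integral_Icc_eq_integral_Ioc, ← intervalIntegral.integral_of_le (by norm_num),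
    poissonIntegral, ← intervalIntegral.integral_const_mul]
  refine intervalIntegral.integral_congr fun t ht ↦ ?_
  rw [uIcc_of_le (by norm_num)] at ht
  simp only [smul_eq_mul, measureReal_slice_preimage_consEquiv_closedBall ht]
  ring

theorem Jd_eq_poissonIntegral (n : ℕ) (u : Ed (n + 1)) :
    Jd (n + 1) u = volume.real (ball (0 : Ed n) 1) * poissonIntegral (n / 2) ‖u‖ := by
  rw [← Jd_single]
  exact Jd_eq_of_norm_eq (by simp)

lemma exists_abs_Jd_le_mul_abs_sub (hd : 1 ≤ d) :
    ∃ C, ∀ u v : Ed d, |Jd d u - Jd d v| ≤ C * |‖u‖ - ‖v‖| := by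
  obtain ⟨n, rfl⟩ := Nat.exists_eq_add_of_le' hd
  refine ⟨volume.real (ball (0 : Ed n) 1) * 2, fun u v ↦ ?_⟩
  rw [Jd_eq_poissonIntegral, Jd_eq_poissonIntegral, ← mul_sub, abs_mul, abs_of_nonneg
    measureReal_nonneg, mul_assoc]
  gcongr
  exact abs_poissonIntegral_sub_le (by positivity) _ _

open Filter in
lemma eventually_exists_Jd_eq_zero (hd : 1 ≤ d) {L : ℝ} (hL : Real.pi < L) :
    ∀ᶠ a in atTop, ∃ r ∈ Ioo a (a + L), ∀ u : Ed d, ‖u‖ = r → Jd d u = 0 := by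
  obtain ⟨n, rfl⟩ := Nat.exists_eq_add_of_le' hd
  filter_upwards [eventually_exists_poissonIntegral_eq_zero (α := n / 2) (by positivity) hL]
    with a ⟨r, hr, hr_zero⟩
  exact ⟨r, hr, fun u hu ↦ by rw [Jd_eq_poissonIntegral, hu, hr_zero, mul_zero]⟩

end BallTransform

section SphereVanishing

open Set Filter Metric Topology Module

lemma not_integrableAtFilter_sub_inv (c : ℝ) :
    ¬ IntegrableAtFilter (fun t ↦ (t - c)⁻¹) (𝓝 c) := by
  rintro ⟨s, hs, h_int⟩
  obtain ⟨ε, hε, h_sub⟩ := nhds_basis_closedBall.mem_iff.1 hs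
  rw [Real.closedBall_eq_Icc] at h_sub
  have h_le : c - ε ≤ c + ε := by linarith
  have h := (intervalIntegrable_iff_integrableOn_Icc_of_le h_le).2 (h_int.mono_set h_sub)
  rw [intervalIntegrable_sub_inv_iff, uIcc_of_le h_le] at h
  rcases h with h | h
  · linarith
  · exact h ⟨by linarith, by linarith⟩

variable {E : Type*} [NormedAddCommGroup E] [NormedSpace ℝ E]

lemma setLIntegral_enorm_inv_norm_smul_sub_eq_top {u : E} {r : ℝ} (hu : u ≠ 0) {s : Set ℝ}
    (hs : s ∈ 𝓝 (r / ‖u‖)) (hs_pos : ∀ t ∈ s, 0 < t) (hs_meas : MeasurableSet s) :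
    ∫⁻ t in s, ‖(‖t • u‖ - r)⁻¹‖ₑ = ⊤ := by
  have h_norm : 0 < ‖u‖ := norm_pos_iff.2 hu
  by_contra h
  refine not_integrableAtFilter_sub_inv (r / ‖u‖) ⟨s, hs, ?_⟩
  have h_int : IntegrableOn (fun t : ℝ ↦ (‖t • u‖ - r)⁻¹) s :=
    ⟨((by fun_prop : Continuous fun t : ℝ ↦ ‖t • u‖ - r).measurable.inv).aestronglyMeasurable,
      lt_top_iff_ne_top.2 h⟩
  refine IntegrableOn.congr_fun (h_int.const_mul ‖u‖) (fun t ht ↦ ?_) hs_meas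
  simp only [norm_smul, Real.norm_of_nonneg (hs_pos t ht).le]
  rw [← div_eq_mul_inv, ← inv_div, sub_div, mul_div_cancel_right₀ _ h_norm.ne']

variable [FiniteDimensional ℝ E] [MeasurableSpace E] [BorelSpace E] (μ : Measure E)
  [μ.IsAddHaarMeasure]

lemma lintegral_comp_smul {G : E → ENNReal} (hG : Measurable G) {t : ℝ} (ht : t ≠ 0) :
    ∫⁻ u, G (t • u) ∂μ = ENNReal.ofReal |(t ^ finrank ℝ E)⁻¹| * ∫⁻ u, G u ∂μ := by
  rw [← lintegral_map hG (measurable_const_smul t), Measure.map_addHaar_smul μ ht,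
    lintegral_smul_measure, smul_eq_mul]

lemma ae_setLIntegral_comp_smul_lt_top {G : E → ENNReal} (hG : Measurable G)
    (hG_int : ∫⁻ u, G u ∂μ ≠ ⊤) {K : Set ℝ} (hK : IsCompact K) (hK₀ : 0 ∉ K) :
    ∀ᵐ u ∂μ, ∫⁻ t in K, G (t • u) < ⊤ := by
  have h_meas : Measurable fun p : E × ℝ ↦ G (p.2 • p.1) :=
    hG.comp (by fun_prop : Continuous fun p : E × ℝ ↦ p.2 • p.1).measurable
  have h_pow : IntegrableOn (fun t : ℝ ↦ |(t ^ finrank ℝ E)⁻¹|) K :=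
    ((continuousOn_pow _).inv₀ fun t ht ↦ pow_ne_zero _ (ne_of_mem_of_not_mem ht hK₀)).abs
      |>.integrableOn_compact hK
  refine ae_lt_top h_meas.lintegral_prod_right' (ne_of_lt ?_)
  calc ∫⁻ u, (∫⁻ t in K, G (t • u)) ∂μ = ∫⁻ t in K, ∫⁻ u, G (t • u) ∂μ :=
        lintegral_lintegral_swap h_meas.aemeasurable
    _ = ∫⁻ t in K, ENNReal.ofReal |(t ^ finrank ℝ E)⁻¹| * ∫⁻ u, G u ∂μ :=
        setLIntegral_congr_fun hK.measurableSet fun t ht ↦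
          lintegral_comp_smul μ hG (ne_of_mem_of_not_mem ht hK₀)
    _ = (∫⁻ t in K, ENNReal.ofReal |(t ^ finrank ℝ E)⁻¹|) * ∫⁻ u, G u ∂μ :=
        lintegral_mul_const _ (by fun_prop)
    _ < ⊤ := ENNReal.mul_lt_top h_pow.lintegral_lt_top (lt_top_iff_ne_top.2 hG_int)

/- Integrability near `u₀` would, by Tonelli, pass to almost every ray through a neighbourhood of
`u₀`, where the function has a simple pole. -/
theorem not_integrableAtFilter_norm_sub_norm_inv {u₀ : E} (hu₀ : u₀ ≠ 0) :
    ¬ IntegrableAtFilter (fun u ↦ (‖u‖ - ‖u₀‖)⁻¹) (𝓝 u₀) μ := by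
  rintro ⟨U, hU, h_int⟩
  obtain ⟨O, hO_sub, hO, hu₀O⟩ := _root_.mem_nhds_iff.1 hU
  have h_smul : Tendsto (fun p : ℝ × E ↦ p.1 • p.2) (𝓝 (1, u₀)) (𝓝 u₀) := by
    simpa using (continuous_smul (M := ℝ) (X := E)).tendsto (1, u₀)
  obtain ⟨I, hI, V, hV, h_sub⟩ := mem_nhds_prod_iff.1 (h_smul (hO.mem_nhds hu₀O))
  obtain ⟨K, hK_nhds, hK_sub, hK⟩ := local_compact_nhds (inter_mem hI (Ioi_mem_nhds one_pos))
  have h_ratio : Tendsto (fun u : E ↦ ‖u₀‖ / ‖u‖) (𝓝 u₀) (𝓝 1) := by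
    rw [← div_self (norm_ne_zero_iff.2 hu₀)]
    exact tendsto_const_nhds.div (continuous_norm.tendsto u₀) (norm_ne_zero_iff.2 hu₀)
  have h_near : ∀ᶠ u in 𝓝 u₀, u ∈ V ∧ u ≠ 0 ∧ K ∈ 𝓝 (‖u₀‖ / ‖u‖) :=
    Filter.Eventually.and hV
      ((eventually_ne_nhds hu₀).and (h_ratio.eventually (eventually_mem_nhds_iff.2 hK_nhds)))
  have h_meas : Measurable fun u : E ↦ (‖u‖ - ‖u₀‖)⁻¹ :=
    (measurable_norm.sub_const ‖u₀‖).inv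
  have h_ae := ae_setLIntegral_comp_smul_lt_top μ (h_meas.enorm.indicator hO.measurableSet)
    (by rw [lintegral_indicator hO.measurableSet]; exact (h_int.mono_set hO_sub).2.ne) hK
    fun h ↦ lt_irrefl 0 (mem_Ioi.1 (hK_sub h).2)
  obtain ⟨u, h_lt, huV, hu, huK⟩ := (Measure.dense_of_ae h_ae).inter_nhds_nonempty h_near
  refine (mem_ofPred.1 h_lt).ne ?_
  rw [← setLIntegral_enorm_inv_norm_smul_sub_eq_top hu huK (fun t ht ↦ (hK_sub ht).2)
    hK.measurableSet]
  refine setLIntegral_congr_fun hK.measurableSet fun t ht ↦ ?_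
  have h_mem : t • u ∈ O := h_sub (mk_mem_prod (hK_sub ht).1 huV)
  exact indicator_of_mem h_mem _

theorem eq_zero_of_norm_le_mul_norm_sub_norm {F : Type*} [NormedAddCommGroup F] {P : E → F}
    {φ : E → ℝ} {u₀ : E} (hu₀ : u₀ ≠ 0) (hP : ContinuousAt P u₀)
    (hφ : IntegrableAtFilter φ (𝓝 u₀) μ) (h_le : ∀ᵐ u ∂μ, ‖P u‖ ≤ φ u * |‖u‖ - ‖u₀‖|) :
    P u₀ = 0 := by
  by_contra hP₀
  obtain ⟨c, hc, hc_lt⟩ := exists_between (norm_pos_iff.2 hP₀)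
  obtain ⟨U, hU, hφU⟩ := hφ
  obtain ⟨O, hO_sub, hO, hu₀O⟩ := _root_.mem_nhds_iff.1
    (inter_mem (hP.norm.eventually_const_lt hc_lt) hU)
  have hφO : IntegrableOn (fun u ↦ c⁻¹ * φ u) O μ :=
    (hφU.mono_set fun u hu ↦ (hO_sub hu).2).const_mul c⁻¹
  have h_meas : Measurable fun u : E ↦ (‖u‖ - ‖u₀‖)⁻¹ := (measurable_norm.sub_const ‖u₀‖).inv
  refine not_integrableAtFilter_norm_sub_norm_inv μ hu₀
    ⟨O, hO.mem_nhds hu₀O, Integrable.mono hφO h_meas.aestronglyMeasurable ?_⟩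
  filter_upwards [ae_restrict_of_ae h_le, ae_restrict_mem hO.measurableSet] with u hu huO
  have hc_le : c ≤ φ u * |‖u‖ - ‖u₀‖| := (hO_sub huO).1.le.trans hu
  have h_pos : 0 < |‖u‖ - ‖u₀‖| := (abs_nonneg _).lt_of_ne fun h ↦ by
    rw [← h, mul_zero] at hc_le
    exact hc.not_ge hc_le
  calc ‖(‖u‖ - ‖u₀‖)⁻¹‖ = c⁻¹ * (c * |‖u‖ - ‖u₀‖|⁻¹) := by
        rw [norm_inv, Real.norm_eq_abs, inv_mul_cancel_left₀ hc.ne']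
    _ ≤ c⁻¹ * φ u := by
        gcongr
        rwa [← div_eq_mul_inv, div_le_iff₀ h_pos]
    _ ≤ ‖c⁻¹ * φ u‖ := le_abs_self _

end SphereVanishing

section Plancherel

open scoped FourierTransform SchwartzMap

variable {V : Type*} [NormedAddCommGroup V] [InnerProductSpace ℝ V] [FiniteDimensional ℝ V]
  [MeasurableSpace V] [BorelSpace V] {f g : V → ℂ}

lemma continuous_fourier (hf : Integrable f) : Continuous (𝓕 f) :=
  VectorFourier.fourierIntegral_continuous Real.continuous_fourierChar
    (L := innerₗ V) continuous_inner hf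

lemma integral_mul_fourier_eq (hf : Integrable f) (hg : Integrable g) :
    ∫ w, g w * 𝓕 f w = ∫ w, 𝓕 g w * f w := by
  have h := VectorFourier.integral_fourierIntegral_smul_eq_flip (L := innerₗ V)
    Real.continuous_fourierChar continuous_inner hg hf
  rw [flip_innerₗ] at h
  exact h.symm

lemma ae_eq_of_integral_schwartzMap_mul_eq (hf : LocallyIntegrable f) (hg : LocallyIntegrable g)
    (h : ∀ φ : 𝓢(V, ℂ), ∫ x, φ x * f x = ∫ x, φ x * g x) : f =ᵐ[volume] g := by
  refine ae_eq_of_integral_contDiff_smul_eq hf hg fun φ hφ hφ_supp ↦ ?_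
  have hφ_supp' : HasCompactSupport fun x ↦ (φ x : ℂ) :=
    hφ_supp.comp_left (g := Complex.ofReal) Complex.ofReal_zero
  exact h (hφ_supp'.toSchwartzMap (Complex.ofRealCLM.contDiff.comp hφ))

lemma memLp_two_fourier (hf : Integrable f) (hf₂ : MemLp f 2) : MemLp (𝓕 f) 2 := by
  suffices h_ae : (𝓕 (hf₂.toLp f) : Lp (α := V) ℂ 2 volume) =ᵐ[volume] 𝓕 f from
    (memLp_congr_ae h_ae).1 (Lp.memLp _)
  refine ae_eq_of_integral_schwartzMap_mul_eq ((Lp.memLp _).locallyIntegrable one_le_two)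
    (continuous_fourier hf).locallyIntegrable fun φ ↦ ?_
  have h := congr($(Lp.fourier_toTemperedDistribution_eq (hf₂.toLp f)) φ)
  simp only [TemperedDistribution.fourier_apply, Lp.toTemperedDistribution_apply,
    smul_eq_mul] at h
  rw [← h, integral_mul_fourier_eq hf φ.integrable, ← SchwartzMap.fourier_coe]
  refine integral_congr_ae ?_
  filter_upwards [hf₂.coeFn_toLp] with x hx
  rw [hx]

theorem fourierInv_fourier_ae_eq (hf : Integrable f) (hf' : Integrable (𝓕 f)) :
    𝓕⁻ (𝓕 f) =ᵐ[volume] f := by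
  have h_inv : 𝓕⁻ (𝓕 f) = fun x ↦ 𝓕 (𝓕 f) (-x) := funext (Real.fourierInv_eq_fourier_neg _)
  have h_cont : Continuous (𝓕⁻ (𝓕 f)) := h_inv ▸ (continuous_fourier hf').comp continuous_neg
  refine ae_eq_of_integral_schwartzMap_mul_eq h_cont.locallyIntegrable hf.locallyIntegrable
    fun φ ↦ ?_
  have h_neg : 𝓕 (fun x ↦ φ (-x)) = 𝓕⁻ φ := by
    rw [SchwartzMap.fourierInv_coe, Real.fourierInv_eq_fourier_comp_neg]
  calc ∫ x, φ x * 𝓕⁻ (𝓕 f) x = ∫ x, φ (-x) * 𝓕 (𝓕 f) x := by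
        rw [h_inv, ← integral_neg_eq_self]
        simp only [neg_neg]
    _ = ∫ x, 𝓕⁻ φ x * 𝓕 f x := by
        rw [integral_mul_fourier_eq hf' φ.integrable.comp_neg, h_neg]
    _ = ∫ x, φ x * f x := by
        rw [integral_mul_fourier_eq hf (𝓕⁻ φ).integrable, ← SchwartzMap.fourier_coe,
          FourierTransform.fourier_fourierInv_eq]

end Plancherel

section FT

open scoped FourierTransform

variable {d : ℕ} {f g : Ed d → ℂ}

lemma FT_eq_fourierIntegral (f : Ed d → ℂ) :
    FT f = VectorFourier.fourierIntegral Real.probChar volume (innerₗ (Ed d)) f := by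
  ext u
  rw [VectorFourier.fourierIntegral_probChar]
  refine integral_congr_ae (.of_forall fun x ↦ ?_)
  simp only [innerₗ_apply_apply, real_inner_comm, smul_eq_mul]
  ring_nf

lemma FT_smul_eq_fourier (f : Ed d → ℂ) (u : Ed d) : FT f ((2 * Real.pi) • u) = 𝓕 f u := by
  rw [Real.fourier_eq']
  refine integral_congr_ae (.of_forall fun x ↦ ?_)
  beta_reduce
  rw [real_inner_smul_left, real_inner_comm, smul_eq_mul]
  push_cast
  ring_nf

lemma continuous_FT (hf : Integrable f) : Continuous (FT f) := by
  rw [FT_eq_fourierIntegral]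
  exact VectorFourier.fourierIntegral_continuous Real.continuous_probChar continuous_inner hf

lemma norm_FT_le (f : Ed d → ℂ) (u : Ed d) : ‖FT f u‖ ≤ ∫ x, ‖f x‖ := by
  rw [FT_eq_fourierIntegral]
  exact VectorFourier.norm_fourierIntegral_le_integral_norm _ _ _ _ _

lemma FT_add (hf : Integrable f) (hg : Integrable g) : FT (f + g) = FT f + FT g := by
  simp only [FT_eq_fourierIntegral]
  exact VectorFourier.fourierIntegral_add Real.continuous_probChar continuous_inner hf hg

lemma FT_smul (c : ℂ) (f : Ed d → ℂ) : FT (c • f) = c • FT f := by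
  simp only [FT_eq_fourierIntegral, VectorFourier.fourierIntegral_const_smul]

lemma integral_mul_FT_eq (hf : Integrable f) (hg : Integrable g) :
    ∫ w, g w * FT f w = ∫ w, FT g w * f w := by
  have h := VectorFourier.integral_fourierIntegral_smul_eq_flip (L := innerₗ (Ed d))
    Real.continuous_probChar continuous_inner hg hf
  rw [flip_innerₗ, ← FT_eq_fourierIntegral, ← FT_eq_fourierIntegral] at h
  exact h.symm

lemma memLp_two_FT (hf : Integrable f) (hf₂ : MemLp f 2) : MemLp (FT f) 2 := by
  have h := (memLp_two_fourier hf hf₂).integrable_norm_pow two_ne_zero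
  simp only [← FT_smul_eq_fourier] at h
  rw [memLp_two_iff_integrable_sq_norm (continuous_FT hf).aestronglyMeasurable]
  exact (integrable_comp_smul_iff volume (fun u ↦ ‖FT f u‖ ^ 2) Real.two_pi_pos.ne').1 h

theorem ae_eq_FT_FT_neg (hf : Integrable f) (hf' : Integrable (FT f)) :
    f =ᵐ[volume] fun u ↦ ((2 * Real.pi) ^ d)⁻¹ • FT (FT f) (-u) := by
  have h_fourier : 𝓕 f = fun w ↦ FT f ((2 * Real.pi) • w) :=
    funext fun w ↦ (FT_smul_eq_fourier f w).symm
  have h_int : Integrable (𝓕 f) := by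
    rw [h_fourier]
    exact hf'.comp_smul Real.two_pi_pos.ne'
  refine (fourierInv_fourier_ae_eq hf h_int).symm.trans (.of_forall fun u ↦ ?_)
  have h_dilate := Measure.integral_comp_smul volume
    (fun y : Ed d ↦ Complex.exp (-Complex.I * (⟪-u, y⟫ : ℝ)) * FT f y) (2 * Real.pi)
  rw [finrank_euclideanSpace_fin, abs_of_pos (by positivity)] at h_dilate
  beta_reduce
  rw [Real.fourierInv_eq_fourier_neg, ← FT_smul_eq_fourier, h_fourier, FT, FT, ← h_dilate]
  simp only [real_inner_smul_left, real_inner_smul_right]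

lemma integrable_Jd_sq : Integrable (fun u ↦ Jd d u ^ 2) := by
  have h_finite : volume (Metric.closedBall (0 : Ed d) 1) ≠ ⊤ := measure_closedBall_lt_top.ne
  set χ : Ed d → ℂ := (Metric.closedBall 0 1).indicator 1
  have h_int : Integrable χ := (integrable_indicator_iff measurableSet_closedBall).2
    (integrableOn_const h_finite)
  have h_memLp : MemLp χ 2 := memLp_indicator_const 2 measurableSet_closedBall 1 (.inr h_finite)
  have h_Jd (u : Ed d) : Jd d u = (FT χ u).re := by
    rw [Jd, FT, ← integral_indicator measurableSet_closedBall]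
    congr 2 with x
    by_cases hx : x ∈ Metric.closedBall (0 : Ed d) 1 <;> simp [χ, hx]
  simp only [h_Jd]
  exact (memLp_two_FT h_int h_memLp).re.integrable_sq

end FT

section BandLimited

open Set Filter Metric Topology

section ExponentialIntegral

variable {X : Type*} {g : X → ℂ} {ξ : X → ℝ} {ρ : ℝ}

lemma norm_exp_mul_mul_le (hξ : ∀ x, g x ≠ 0 → |ξ x| ≤ ρ) (z : ℂ) (x : X) :
    ‖Complex.exp (-Complex.I * ξ x * z) * g x‖ ≤ ‖g x‖ * Real.exp (ρ * |z.im|) := by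
  obtain hg | hg := eq_or_ne (g x) 0
  · rw [hg, mul_zero, norm_zero, zero_mul]
  rw [norm_mul, mul_comm, Complex.norm_exp]
  have h_re : (-Complex.I * ξ x * z).re = ξ x * z.im := by simp [mul_assoc]
  rw [h_re]
  gcongr ‖g x‖ * Real.exp ?_
  calc ξ x * z.im ≤ |ξ x| * |z.im| := (le_abs_self _).trans (abs_mul _ _).le
    _ ≤ ρ * |z.im| := by gcongr; exact hξ x hg

variable [MeasurableSpace X] {μ : Measure X}

lemma norm_integral_exp_mul_mul_le (hg : Integrable g μ) (hξ : ∀ x, g x ≠ 0 → |ξ x| ≤ ρ) (z : ℂ) :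
    ‖∫ x, Complex.exp (-Complex.I * ξ x * z) * g x ∂μ‖ ≤
      (∫ x, ‖g x‖ ∂μ) * Real.exp (ρ * |z.im|) := by
  rw [← integral_mul_const]
  exact norm_integral_le_of_norm_le (hg.norm.mul_const _)
    (.of_forall (norm_exp_mul_mul_le hξ z))

lemma differentiable_integral_exp_mul_mul (hg : Integrable g μ) (hξ_meas : Measurable ξ)
    (hξ : ∀ x, g x ≠ 0 → |ξ x| ≤ ρ) :
    Differentiable ℂ fun z ↦ ∫ x, Complex.exp (-Complex.I * ξ x * z) * g x ∂μ := fun z₀ ↦ by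
  have h_meas (z : ℂ) :
      AEStronglyMeasurable (fun x ↦ Complex.exp (-Complex.I * ξ x * z) * g x) μ :=
    (by fun_prop : Measurable fun x ↦ Complex.exp (-Complex.I * ξ x * z)).aestronglyMeasurable.mul
      hg.1
  refine (hasDerivAt_integral_of_dominated_loc_of_deriv_le
    (F' := fun z x ↦ (-Complex.I * ξ x) * (Complex.exp (-Complex.I * ξ x * z) * g x))
    (bound := fun x ↦ |ρ| * (‖g x‖ * Real.exp (|ρ| * (|z₀.im| + 1))))
    (ball_mem_nhds z₀ one_pos) (.of_forall h_meas)
    ((hg.norm.mul_const _).mono' (h_meas z₀) (.of_forall (norm_exp_mul_mul_le hξ z₀)))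
    ((by fun_prop : Measurable fun x ↦ -Complex.I * (ξ x : ℂ)).aestronglyMeasurable.mul
      (h_meas z₀))
    (.of_forall fun x z hz ↦ ?_) ((hg.norm.mul_const _).const_mul _)
    (.of_forall fun x z _ ↦ ?_)).2.differentiableAt
  · obtain hx | hx := eq_or_ne (g x) 0
    · simp [hx]
    have h_im : |z.im| ≤ |z₀.im| + 1 := by
      have h := (abs_im_le_norm (z - z₀)).trans (mem_ball_iff_norm.1 hz).le
      rw [sub_im] at h
      linarith [abs_sub_abs_le_abs_sub z.im z₀.im]
    have hρ : ρ ≤ |ρ| := le_abs_self ρ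
    rw [norm_mul]
    gcongr
    · simpa using (hξ x hx).trans hρ
    · refine (norm_exp_mul_mul_le hξ z x).trans ?_
      gcongr
  · have h := ((hasDerivAt_id' z).const_mul (-Complex.I * (ξ x : ℂ))).cexp.mul_const (g x)
    exact h.congr_deriv (by ring)

end ExponentialIntegral

variable {d : ℕ} {ρ : ℝ}

theorem FT_eq_zero_of_frequent_zeros {g : Ed d → ℂ} {L : ℝ} (hg : Integrable g) (hρ : 0 ≤ ρ)
    (hg_supp : ∀ w, ρ < ‖w‖ → g w = 0) (hL : 0 < L) (hρL : ρ * L < Real.pi)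
    (h_zero : ∀ᶠ a : ℝ in atTop, ∃ r ∈ Ioo a (a + L), ∀ u : Ed d, ‖u‖ = r → FT g u = 0)
    {u : Ed d} (hu : u ≠ 0) : FT g u = 0 := by
  set ω := ‖u‖⁻¹ • u
  have hω : ‖ω‖ = 1 := norm_smul_inv_norm hu
  set F : ℂ → ℂ := fun z ↦ ∫ w, Complex.exp (-Complex.I * (⟪ω, w⟫ : ℝ) * z) * g w with hF
  have hF_real (t : ℝ) : F t = FT g (t • ω) := by
    simp only [hF, FT, real_inner_smul_left, ofReal_mul, mul_assoc, mul_comm (t : ℂ)]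
  have h_inner (w : Ed d) (hw : g w ≠ 0) : |⟪ω, w⟫| ≤ ρ := by
    have h := abs_real_inner_le_norm ω w
    rw [hω, one_mul] at h
    exact h.trans (not_lt.1 fun h_lt ↦ hw (hg_supp w h_lt))
  have hF_zero : F = 0 := by
    refine entire_eq_zero_of_frequent_zeros
      (differentiable_integral_exp_mul_mul hg (by fun_prop) h_inner) hρ hL hρL
      (norm_integral_exp_mul_mul_le hg h_inner) ?_
    filter_upwards [h_zero, eventually_ge_atTop 0] with a ⟨r, hr, hr_zero⟩ ha
    have hr_norm : |r| = r := abs_of_pos (ha.trans_lt hr.1)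
    refine ⟨r, hr, ?_, ?_⟩
    · rw [hF_real]
      exact hr_zero _ (by rw [norm_smul, hω, mul_one, Real.norm_eq_abs, hr_norm])
    · rw [← ofReal_neg, hF_real]
      exact hr_zero _ (by rw [norm_smul, hω, mul_one, Real.norm_eq_abs, abs_neg, hr_norm])
  have h := hF_real ‖u‖
  rw [hF_zero, smul_inv_smul₀ (norm_ne_zero_iff.2 hu)] at h
  exact h.symm

lemma eq_zero_of_Jd_eq_zero (hd : 1 ≤ d) {P : Ed d → ℂ} {φ : Ed d → ℝ} {u : Ed d}
    (hP : ContinuousAt P u) (hφ : LocallyIntegrable φ) (h_le : ∀ᵐ v, ‖P v‖ ≤ φ v * |Jd d v|)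
    (hu : u ≠ 0) (hJu : Jd d u = 0) : P u = 0 := by
  obtain ⟨C, hC⟩ := exists_abs_Jd_le_mul_abs_sub hd
  refine eq_zero_of_norm_le_mul_norm_sub_norm volume hu hP (φ := fun v ↦ C * ‖φ v‖) ?_ ?_
  · obtain ⟨s, hs, hφs⟩ := hφ u
    exact ⟨s, hs, hφs.norm.const_mul C⟩
  filter_upwards [h_le] with v hv
  have hJv : |Jd d v| ≤ C * |‖v‖ - ‖u‖| := by simpa only [hJu, sub_zero] using hC v u
  calc ‖P v‖ ≤ φ v * |Jd d v| := hv
    _ ≤ ‖φ v‖ * (C * |‖v‖ - ‖u‖|) := by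
      gcongr
      exact Real.le_norm_self _
    _ = C * ‖φ v‖ * |‖v‖ - ‖u‖| := by ring

theorem ae_eq_zero_of_norm_le_mul_abs_Jd (hd : 1 ≤ d) (hρ₀ : 0 ≤ ρ) (hρ₁ : ρ < 1) {k : Ed d → ℂ}
    {φ : Ed d → ℝ} (hk : Integrable k) (hk_supp : ∀ w, ρ < ‖w‖ → FT k w = 0)
    (hφ : LocallyIntegrable φ) (h_le : ∀ᵐ u, ‖k u‖ ≤ φ u * |Jd d u|) : k =ᵐ[volume] 0 := by
  have hFT_int : Integrable (FT k) :=
    (continuous_FT hk).integrable_of_hasCompactSupport <|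
      .intro (isCompact_closedBall 0 ρ) fun w hw ↦ hk_supp w (by simpa using hw)
  have hk_eq := ae_eq_FT_FT_neg hk hFT_int
  set P : Ed d → ℂ := fun u ↦ ((2 * Real.pi) ^ d)⁻¹ • FT (FT k) (-u)
  have hP_cont : Continuous P := by
    have := continuous_FT hFT_int
    fun_prop
  have hP_le : ∀ᵐ u, ‖P u‖ ≤ φ u * |Jd d u| := by
    filter_upwards [hk_eq, h_le] with u hu hu_le
    rwa [← hu]
  have h_pos : 0 < 1 + ρ := by linarith
  have hπL : Real.pi < 2 * Real.pi / (1 + ρ) := by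
    rw [lt_div_iff₀ h_pos]
    nlinarith [Real.pi_pos]
  have hρL : ρ * (2 * Real.pi / (1 + ρ)) < Real.pi := by
    rw [mul_div_assoc', div_lt_iff₀ h_pos]
    nlinarith [Real.pi_pos]
  have h_frequent : ∀ᶠ a : ℝ in atTop, ∃ r ∈ Ioo a (a + 2 * Real.pi / (1 + ρ)),
      ∀ u : Ed d, ‖u‖ = r → FT (FT k) u = 0 := by
    filter_upwards [eventually_exists_Jd_eq_zero hd hπL, eventually_ge_atTop 0]
      with a ⟨r, hr, hr_zero⟩ ha
    refine ⟨r, hr, fun u hu ↦ ?_⟩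
    have h_ne : -u ≠ 0 := norm_pos_iff.1 (by rw [norm_neg, hu]; exact ha.trans_lt hr.1)
    have hP_zero := eq_zero_of_Jd_eq_zero hd hP_cont.continuousAt hφ hP_le h_ne
      (hr_zero _ (by rw [norm_neg, hu]))
    simp only [P, smul_eq_zero, neg_neg] at hP_zero
    exact hP_zero.resolve_left (by positivity)
  have : Nonempty (Fin d) := ⟨⟨0, hd⟩⟩
  filter_upwards [hk_eq, Measure.ae_ne volume 0] with u hu hu_ne
  rw [hu, Pi.zero_apply]
  exact smul_eq_zero_of_right _ <| FT_eq_zero_of_frequent_zeros hFT_int hρ₀ hk_supp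
    (Real.pi_pos.trans hπL) hρL h_frequent (neg_ne_zero.2 hu_ne)

end BandLimited

section Duality

lemma norm_toLp_sq_eq_integral {X E : Type*} [MeasurableSpace X] {μ : Measure X}
    [NormedAddCommGroup E] {f : X → E} (hf : MemLp f 2 μ) :
    ‖hf.toLp f‖ ^ 2 = ∫ x, ‖f x‖ ^ 2 ∂μ := by
  rw [Lp.norm_toLp, hf.eLpNorm_eq_integral_rpow_norm two_ne_zero ENNReal.ofNat_ne_top,
    ENNReal.toReal_ofReal (by positivity), ENNReal.toReal_ofNat, ← Real.rpow_natCast,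
    ← Real.rpow_mul (by positivity)]
  simp

variable {d : ℕ} {A : Set (Ed d)} {f g : Ed d → ℂ}

lemma IsCBS.integrable (hf : IsCBS A f) : Integrable f := by
  obtain ⟨hf_meas, ⟨C, hC⟩, hf_bdd, -⟩ := hf
  refine (integrableOn_iff_integrable_of_support_subset subset_closure).1 ?_
  exact Measure.integrableOn_of_bounded hf_bdd.isCompact_closure.measure_ne_top
    hf_meas.aestronglyMeasurable (.of_forall hC)

lemma IsCBS.zero : IsCBS A 0 :=
  ⟨measurable_const, ⟨0, by simp⟩, by simp, by simp⟩

lemma IsCBS.add (hf : IsCBS A f) (hg : IsCBS A g) : IsCBS A (f + g) := by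
  obtain ⟨hf_meas, ⟨C, hC⟩, hf_bdd, hfA⟩ := hf
  obtain ⟨hg_meas, ⟨D, hD⟩, hg_bdd, hgA⟩ := hg
  exact ⟨hf_meas.add hg_meas, ⟨C + D, fun x ↦ norm_add_le_of_le (hC x) (hD x)⟩,
    (hf_bdd.union hg_bdd).subset (Function.support_add f g),
    (Function.support_add f g).trans (Set.union_subset hfA hgA)⟩

lemma IsCBS.smul (c : ℂ) (hf : IsCBS A f) : IsCBS A (c • f) := by
  obtain ⟨hf_meas, ⟨C, hC⟩, hf_bdd, hfA⟩ := hf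
  refine ⟨hf_meas.const_smul c, ⟨‖c‖ * C, fun x ↦ ?_⟩,
    hf_bdd.subset (Function.support_const_smul_subset c f),
    (Function.support_const_smul_subset c f).trans hfA⟩
  rw [Pi.smul_apply, norm_smul]
  gcongr
  exact hC x

lemma IsCBS.ofReal {φ : Ed d → ℝ} (hφ : Continuous φ) (hφ_supp : HasCompactSupport φ)
    (hφA : tsupport φ ⊆ A) : IsCBS A fun x ↦ (φ x : ℂ) := by
  have h_support : Function.support (fun x ↦ (φ x : ℂ)) ⊆ tsupport φ := fun x hx ↦
    subset_tsupport φ (ofReal_ne_zero.1 hx)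
  obtain ⟨C, hC⟩ := hφ_supp.exists_bound_of_continuous hφ
  exact ⟨(continuous_ofReal.comp hφ).measurable, ⟨C, fun x ↦ by simpa using hC x⟩,
    hφ_supp.isBounded.subset h_support, h_support.trans hφA⟩

lemma FT_eq_zero_of_forall_integral_mul_FT_eq_zero (hA : IsClosed A) (hf : Integrable f)
    (h : ∀ g, IsCBS Aᶜ g → ∫ u, f u * FT g u = 0) {w : Ed d} (hw : w ∉ A) : FT f w = 0 := by
  have h_ae : ∀ᵐ w, w ∈ Aᶜ → FT f w = 0 := by
    refine hA.isOpen_compl.ae_eq_zero_of_integral_contDiff_smul_eq_zero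
      ((continuous_FT hf).locallyIntegrable.locallyIntegrableOn _) fun φ hφ hφ_supp hφA ↦ ?_
    have hφ_CBS := IsCBS.ofReal hφ.continuous hφ_supp hφA
    have h_zero := h _ hφ_CBS
    rw [integral_mul_FT_eq hφ_CBS.integrable hf] at h_zero
    simpa only [real_smul, mul_comm] using h_zero
  exact Measure.eqOn_open_of_ae_eq (g := 0)
    ((ae_restrict_iff' hA.isOpen_compl.measurableSet).2 h_ae) hA.isOpen_compl
    (continuous_FT hf).continuousOn continuousOn_const hw

section FiniteMeasure

variable {S : Measure (Ed d)} [IsFiniteMeasure S]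

lemma memLp_FT (S : Measure (Ed d)) [IsFiniteMeasure S] (hf : Integrable f) : MemLp (FT f) 2 S :=
  .of_bound (continuous_FT hf).aestronglyMeasurable _ (.of_forall (norm_FT_le f))

/-- The Fourier transforms of the bounded compactly supported functions on `A`, as a subspace of
`L²(S)`. For the random field with spectral measure `S` these are the linear statistics determined
by the values of the field on `A`. -/
def cbsFTSubmodule (S : Measure (Ed d)) [IsFiniteMeasure S] (A : Set (Ed d)) :
    Submodule ℂ (Lp ℂ 2 S) where
  carrier := {x | ∃ f, ∃ hf : IsCBS A f, (memLp_FT S hf.integrable).toLp (FT f) = x}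
  zero_mem' := by
    refine ⟨0, IsCBS.zero, ?_⟩
    have h_zero : FT (0 : Ed d → ℂ) = 0 := by simpa using FT_smul 0 (0 : Ed d → ℂ)
    simp only [h_zero, MemLp.toLp_zero]
  add_mem' := by
    rintro _ _ ⟨f, hf, rfl⟩ ⟨g, hg, rfl⟩
    refine ⟨f + g, hf.add hg, ?_⟩
    rw [← MemLp.toLp_add]
    simp only [FT_add hf.integrable hg.integrable]
  smul_mem' := by
    rintro c _ ⟨f, hf, rfl⟩
    refine ⟨c • f, hf.smul c, ?_⟩
    rw [← MemLp.toLp_const_smul]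
    simp only [FT_smul]

lemma LMR.of_orthogonal_eq_bot (h : (cbsFTSubmodule S Aᶜ)ᗮ = ⊥) : LMR S A := by
  intro f hf ε hε
  have h_mem : (memLp_FT S hf.integrable).toLp (FT f) ∈
      (cbsFTSubmodule S Aᶜ).topologicalClosure := by
    rw [Submodule.topologicalClosure_eq_top_iff.2 h]
    exact Submodule.mem_top
  obtain ⟨_, ⟨g, hg, rfl⟩, h_dist⟩ := Metric.mem_closure_iff.1 h_mem √ε (Real.sqrt_pos.2 hε)
  refine ⟨g, hg, ?_⟩
  rw [dist_eq_norm, ← MemLp.toLp_sub, Real.lt_sqrt (norm_nonneg _),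
    norm_toLp_sq_eq_integral] at h_dist
  exact h_dist

lemma LMR.of_forall_integral_eq_zero
    (h : ∀ ψ : Lp ℂ 2 S,
      (∀ g, IsCBS Aᶜ g → ∫ u, FT g u * (starRingEnd ℂ) (ψ u) ∂S = 0) → ψ = 0) :
    LMR S A := by
  refine .of_orthogonal_eq_bot ((Submodule.eq_bot_iff _).2 fun ψ hψ ↦ h ψ fun g hg ↦ ?_)
  have h_inner := (Submodule.mem_orthogonal' _ _).1 hψ _ ⟨g, hg, rfl⟩
  rw [L2.inner_def] at h_inner
  rw [← h_inner]
  refine integral_congr_ae ?_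
  filter_upwards [(memLp_FT S hg.integrable).coeFn_toLp] with u hu
  rw [hu, RCLike.inner_apply]

end FiniteMeasure

/-- The isometry `ψ ↦ J ψ̄` from `L²(J² dx)` into `L²(dx)` turns orthogonality to the Fourier
transforms of functions supported off `A` into the vanishing of `FT (J * J ψ̄)` off `A`. -/
theorem LMR.withDensity_sq {J : Ed d → ℝ} (hJ_meas : Measurable J)
    (hJ : Integrable fun u ↦ J u ^ 2) (hA : IsClosed A)
    (h : ∀ g : Ed d → ℂ, MemLp g 2 → (∀ w ∉ A, FT (fun u ↦ J u * g u) w = 0) →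
      ∀ᵐ u, J u * g u = 0) :
    LMR (volume.withDensity fun u ↦ ENNReal.ofReal (J u ^ 2)) A := by
  have h_meas : Measurable fun u ↦ ENNReal.ofReal (J u ^ 2) := by fun_prop
  have h_toReal (u : Ed d) : (ENNReal.ofReal (J u ^ 2)).toReal = J u ^ 2 :=
    ENNReal.toReal_ofReal (sq_nonneg _)
  have h_lt_top : ∀ᵐ u, ENNReal.ofReal (J u ^ 2) < ⊤ := .of_forall fun u ↦ ENNReal.ofReal_lt_top
  have := isFiniteMeasure_withDensity_ofReal hJ.2
  refine .of_forall_integral_eq_zero fun ψ hψ ↦ ?_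
  set g : Ed d → ℂ := fun u ↦ J u * (starRingEnd ℂ) (ψ u)
  have : Measurable ψ := (Lp.stronglyMeasurable ψ).measurable
  have hg_meas : AEStronglyMeasurable g := by fun_prop
  have hg : MemLp g 2 := by
    rw [memLp_two_iff_integrable_sq_norm hg_meas]
    have hψ_sq := (integrable_withDensity_iff_integrable_smul' h_meas h_lt_top).1
      ((Lp.memLp ψ).integrable_norm_pow two_ne_zero)
    simpa [g, h_toReal, mul_pow] using hψ_sq
  have hJg : Integrable fun u ↦ J u * g u :=
    MemLp.integrable_mul ((memLp_two_iff_integrable_sq hJ_meas.aestronglyMeasurable).2 hJ).ofReal hg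
  have h_zero := h g hg fun w hw ↦
    FT_eq_zero_of_forall_integral_mul_FT_eq_zero hA hJg (fun f hf ↦ by
      rw [← hψ f hf, integral_withDensity_eq_integral_toReal_smul h_meas h_lt_top]
      refine integral_congr_ae (.of_forall fun u ↦ ?_)
      simp only [g, h_toReal, real_smul, ofReal_pow]
      ring) hw
  rw [Lp.eq_zero_iff_ae_eq_zero, Filter.EventuallyEq, ae_withDensity_iff h_meas]
  filter_upwards [h_zero] with u hu hJu
  have hJu' : J u ≠ 0 := by
    rintro h
    simp [h] at hJu
  simpa [g, hJu'] using hu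

end Duality

theorem triangle_field_rigid_general {d : ℕ} (hd : 1 ≤ d) {ρ : ℝ} (hρ : ρ < 1) :
    LMR (volume.withDensity fun u => ENNReal.ofReal (Jd d u ^ 2))
      (Metric.closedBall (0 : Ed d) ρ) := by
  refine .withDensity_sq continuous_Jd.measurable integrable_Jd_sq Metric.isClosed_closedBall
    fun g hg h_FT ↦ ?_
  have hJ : MemLp (Jd d) 2 :=
    (memLp_two_iff_integrable_sq continuous_Jd.aestronglyMeasurable).2 integrable_Jd_sq
  refine ae_eq_zero_of_norm_le_mul_abs_Jd hd (le_max_right ρ 0) (max_lt hρ one_pos)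
    (φ := fun u ↦ ‖g u‖) (MemLp.integrable_mul hJ.ofReal hg) (fun w hw ↦ h_FT w ?_)
    (hg.norm.locallyIntegrable one_le_two) (.of_forall fun u ↦ ?_)
  · simpa using (le_max_left ρ 0).trans_lt hw
  · rw [norm_mul, norm_real, Real.norm_eq_abs, mul_comm]

/-- Theorem 7 (rigidity part): the measure with density `J_d²` w.r.t. Lebesgue measure
(the spectral measure of the field with covariance `1_{B(0,1)} ∗ 1_{B(0,1)}`) induces
linear maximal rigidity on the closed ball `B(0,ρ)` for every `0 < ρ < 2/π`. -/
theorem triangle_field_rigid {d : ℕ} (hd : 1 ≤ d) (ρ : ℝ)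
    (hρ_pos : 0 < ρ) (hρ_lt : ρ < 2 / Real.pi) :
    LMR (volume.withDensity fun u => ENNReal.ofReal (Jd d u ^ 2))
      (Metric.closedBall (0 : Ed d) ρ) :=
  triangle_field_rigid_general hd <| hρ_lt.trans <|
    (div_lt_one Real.pi_pos).2 (by linarith [Real.pi_gt_three])
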